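/- Let K be a field. Let P₁, P₂ ∈ Sp(4, K) be cyclic and strictly hyperbolic symplectic matrices. Then for every M ∈ Sp(4, K) with M² ≠ I₄, there exist S₁, S₂ ∈ Sp(4, K) such that M = (S₁ P₁ S₁⁻¹) · (S₂ P₂ S₂⁻¹). -/

import Mathlib

open Matrix Polynomial

noncomputable section

/-- The standard symplectic form matrix `G = [[0, Iₙ], [-Iₙ, 0]]`. -/
def sympJ (n : ℕ) (K : Type*) [Field K] : Matrix (Fin n ⊕ Fin n) (Fin n ⊕ Fin n) K :=
  Matrix.fromBlocks 0 1 (-1) 0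

/-- Membership in the standard symplectic group `Sp(2n, K)`: `P G Pᵀ = G`. -/
def IsSymplectic {n : ℕ} {K : Type*} [Field K]
    (P : Matrix (Fin n ⊕ Fin n) (Fin n ⊕ Fin n) K) : Prop :=
  P * sympJ n K * Pᵀ = sympJ n K

/-- A matrix is cyclic if its characteristic polynomial equals its minimal polynomial. -/
def IsCyclicMat {ι : Type*} [Fintype ι] [DecidableEq ι] {K : Type*} [Field K]
    (A : Matrix ι ι K) : Prop :=
  A.charpoly = minpoly K A

/-- The reciprocal polynomial `q*(x) = q(0)⁻¹ xⁿ q(1/x)` of a polynomial `q`. -/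
def recipPoly {K : Type*} [Field K] (q : Polynomial K) : Polynomial K :=
  Polynomial.C (q.coeff 0)⁻¹ * q.reverse

/-- A symplectic matrix is strictly hyperbolic if its minimal polynomial is `q q*`
with `q` monic of degree `n`, `q(0) ≠ 0`, and `q` coprime to its reciprocal `q*`. -/
def IsStrictlyHyperbolic {n : ℕ} {K : Type*} [Field K]
    (P : Matrix (Fin n ⊕ Fin n) (Fin n ⊕ Fin n) K) : Prop :=
  ∃ q : Polynomial K, q.Monic ∧ q.natDegree = n ∧ q.coeff 0 ≠ 0 ∧
    IsCoprime q (recipPoly q) ∧ minpoly K P = q * recipPoly q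

/-!
Write `A† = -J Aᵀ J` for the adjoint with respect to the symplectic form, so that `A` is symplectic
iff `A† = A⁻¹`.

* If `P` is cyclic symplectic with minimal polynomial `q q*` and `q`, `q*` are coprime, then the
  minimal polynomial determines the symplectic class of `P`. Indeed let `s P s⁻¹ = Q` with `s`
  invertible and `Q` symplectic. Then `t = s† s` commutes with `P`. One of the two idempotents of
  `K[P] ≃ K[x]/(q) × K[x]/(q*)` is a `π` with `π† = 1 - π`, and `g = t π + (1 - π)` satisfies
  `g† g = t`, so that `s g⁻¹` is symplectic and still conjugates `P` to `Q`.
* A symplectic matrix with upper left block `X Y`, where `X` and `Y` are invertible, is the product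
  of a block lower triangular matrix with corner `X` and a block upper triangular one with corner
  `Y`. If `X` and `Y` are cyclic with characteristic polynomials `q₁` and `q₂`, the factors have
  minimal polynomials `q₁ q₁*` and `q₂ q₂*`, so they lie in the classes of `P₁` and `P₂`.
* If `M² ≠ 1`, then `ω (M x) x ≠ 0` for some `x`, and a symplectic basis starting with `x` and a
  multiple of `M x` makes the two left blocks of `M` diagonal. Conjugation by `[[1, Z], [0, 1]]`
  with `Z` symmetric then turns the upper left block into a product `X Y` as above.
-/

section Unitary

variable {A : Type*} [Ring A] [StarRing A]

theorem exists_star_mul_self_eq {t π : A} (ht : IsSelfAdjoint t) (hu : IsUnit t)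
    (hπ : IsIdempotentElem π) (hstar : star π = 1 - π) (hπt : Commute π t) :
    ∃ g : Aˣ, star (g : A) * g = t ∧ ∀ p, Commute p t → Commute p π → Commute p g := by
  set g := t * π + (1 - π) with hg
  have hππ : π * π = π := hπ
  have hstar_g : star g = t * (1 - π) + π := by
    rw [hg, star_add, star_mul, star_sub, star_one, hstar, ht.star_eq, sub_sub_cancel, sub_mul,
      mul_sub, one_mul, mul_one, hπt.eq]
  have hπtπ : π * (t * π) = t * π := by rw [← mul_assoc, hπt.eq, mul_assoc, hππ]
  have hgg : star g * g = t := by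
    rw [hstar_g, hg]
    simp only [add_mul, mul_add, mul_sub, sub_mul, mul_one, mul_assoc, hππ, hπtπ]
    abel
  have hgg' : g * star g = t := by
    rw [hstar_g, hg]
    simp only [add_mul, mul_add, mul_sub, sub_mul, mul_one, one_mul, mul_assoc, hππ, hπt.eq, hπtπ]
    abel
  obtain ⟨v, hv⟩ : IsUnit g :=
    ((Commute.isUnit_mul_iff (hgg.trans hgg'.symm)).1 (hgg ▸ hu)).2
  refine ⟨v, by rwa [hv], fun p hpt hpπ ↦ ?_⟩
  rw [hv]
  exact (hpt.mul_right hpπ).add_right ((Commute.one_right p).sub_right hpπ)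

theorem commute_star_mul_self_of_mul_eq_mul {p r s : A} (hp : p ∈ unitary A) (hr : r ∈ unitary A)
    (h : s * p = r * s) : Commute p (star s * s) := by
  have hstar : star p * star s = star s * star r := by
    simpa only [star_mul] using congrArg star h
  calc p * (star s * s) = p * (star s * star r) * (r * s) := by
        rw [mul_assoc p, mul_assoc (star s), ← mul_assoc (star r), hr.1, one_mul]
    _ = star s * s * p := by
        rw [← hstar, ← mul_assoc p, hp.2, one_mul, ← h, mul_assoc]

theorem exists_unitary_conj {p r s π : A} (hp : p ∈ unitary A) (hr : r ∈ unitary A)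
    (hs : IsUnit s) (hsp : s * p = r * s) (hπ : IsIdempotentElem π) (hstar : star π = 1 - π)
    (hcomm : ∀ t, Commute p t → Commute π t) :
    ∃ u ∈ unitary A, u * p = r * u := by
  have hpt := commute_star_mul_self_of_mul_eq_mul hp hr hsp
  obtain ⟨g, hg, hcomm_g⟩ :=
    exists_star_mul_self_eq (.star_mul_self s) (hs.star.mul hs) hπ hstar (hcomm _ hpt)
  have hpg : Commute p g := hcomm_g p hpt (hcomm p rfl).symm
  refine ⟨s * ↑g⁻¹, (hs.mul g⁻¹.isUnit).mem_unitary_iff_star_mul_self.2 ?_, ?_⟩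
  · calc star (s * ↑g⁻¹) * (s * ↑g⁻¹) = star (↑g⁻¹ : A) * (star s * s) * ↑g⁻¹ := by
          simp only [star_mul, mul_assoc]
      _ = star ((g : A) * ↑g⁻¹) * (g * ↑g⁻¹) := by
          rw [← hg, star_mul]
          simp only [mul_assoc]
      _ = 1 := by simp only [Units.mul_inv, star_one, mul_one]
  · rw [mul_assoc, ← hpg.units_inv_right.eq, ← mul_assoc, hsp, mul_assoc]

end Unitary

section Reverse

theorem aeval_mul_pow_eq_aeval_reverse {R A : Type*} [CommSemiring R] [Semiring A] [Algebra R A]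
    {a b : A} (h : b * a = 1) (f : R[X]) :
    aeval b f * a ^ f.natDegree = aeval a f.reverse := by
  suffices ∀ N, f.natDegree ≤ N → aeval b f * a ^ N = aeval a (f.reflect N) from this _ le_rfl
  intro N
  refine Polynomial.induction_with_natDegree_le
    (motive := fun f ↦ aeval b f * a ^ N = aeval a (f.reflect N)) N (by simp) ?_ ?_ f
  · intro n c _ hn
    rw [reflect_C_mul_X_pow, revAt_le hn]
    simp only [map_mul, aeval_C, map_pow, aeval_X]
    rw [mul_assoc, ← Nat.add_sub_of_le hn, pow_add, ← mul_assoc (b ^ n), pow_mul_pow_eq_one n h,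
      one_mul, Nat.add_sub_cancel_left]
  · intro f g _ _ hf hg
    rw [map_add, add_mul, hf, hg, reflect_add, map_add]

theorem aeval_recipPoly {K A : Type*} [Field K] [Ring A] [Algebra K A]
    {a b : A} (h : b * a = 1) (q : K[X]) :
    aeval a (recipPoly q) = (q.coeff 0)⁻¹ • (aeval b q * a ^ q.natDegree) := by
  rw [recipPoly, map_mul, aeval_C, ← Algebra.smul_def, aeval_mul_pow_eq_aeval_reverse h]

end Reverse

section Similarity

variable {K V : Type*} [Field K] [AddCommGroup V] [Module K V] [FiniteDimensional K V]

theorem nonempty_linearEquiv_quotient_minpoly {f : Module.End K V}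
    (hf : (minpoly K f).natDegree = Module.finrank K V) :
    Nonempty ((K[X] ⧸ Ideal.span {minpoly K f}) ≃ₗ[K[X]] Module.AEval' f) := by
  obtain ⟨x, hx⟩ := Module.exists_ker_toSpanSingleton_eq_annihilator K[X] (Module.AEval' f)
  rw [← span_minpoly_eq_annihilator] at hx
  let φ := (Ideal.span {minpoly K f}).liftQ (LinearMap.toSpanSingleton K[X] _ x) hx.ge
  have hinj : Function.Injective φ :=
    LinearMap.ker_eq_bot.1 (Submodule.ker_liftQ_eq_bot' _ _ hx.symm)
  have hrank : Module.finrank K (K[X] ⧸ Ideal.span {minpoly K f})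
      = Module.finrank K (Module.AEval' f) := by
    rw [finrank_quotient_span_eq_natDegree, hf, (Module.AEval'.of f).finrank_eq]
  have := Module.Finite.equiv (Module.AEval'.of f)
  have : FiniteDimensional K (K[X] ⧸ Ideal.span {minpoly K f}) :=
    (minpoly.monic (Algebra.IsIntegral.isIntegral f)).finite_quotient
  exact ⟨LinearEquiv.ofBijective φ ⟨hinj,
    (LinearMap.injective_iff_surjective_of_finrank_eq_finrank
      (f := φ.restrictScalars K) hrank).1 hinj⟩⟩

theorem isConj_of_minpoly_eq {f g : Module.End K V} (h : minpoly K f = minpoly K g)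
    (hf : (minpoly K f).natDegree = Module.finrank K V) : IsConj f g := by
  obtain ⟨φ⟩ := nonempty_linearEquiv_quotient_minpoly hf
  obtain ⟨ψ⟩ := nonempty_linearEquiv_quotient_minpoly (h ▸ hf)
  rw [← h] at ψ
  let e := φ.symm.trans ψ
  refine ⟨LinearMap.GeneralLinearGroup.ofLinearEquiv ((Module.AEval'.of f).trans
    ((e.restrictScalars K).trans (Module.AEval'.of g).symm)), LinearMap.ext fun v ↦ ?_⟩
  change (Module.AEval'.of g).symm (e (Module.AEval'.of f (f v)))
    = g ((Module.AEval'.of g).symm (e (Module.AEval'.of f v)))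
  rw [← Module.AEval'.X_smul_of, map_smul, Module.AEval'.of_symm_X_smul]

theorem IsCyclicMat.isConj {ι : Type*} [Fintype ι] [DecidableEq ι] {A B : Matrix ι ι K}
    (hA : IsCyclicMat A) (h : minpoly K A = minpoly K B) : IsConj A B := by
  have hconj : IsConj (toLinAlgEquiv' A) (toLinAlgEquiv' B) := by
    refine isConj_of_minpoly_eq (by simpa only [minpoly.algEquiv_eq] using h) ?_
    rw [minpoly.algEquiv_eq, ← hA, charpoly_natDegree_eq_dim,
      Module.finrank_fintype_fun_eq_card]
  simpa using LinearMap.toMatrixAlgEquiv'.toMonoidHom.map_isConj hconj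

end Similarity

section Polynomial

variable {K : Type*} [Field K] {q : K[X]}

theorem coeff_zero_ne_zero_of_isCoprime_recipPoly (h : IsCoprime q (recipPoly q)) :
    q.coeff 0 ≠ 0 := by
  intro h0
  have hq : IsUnit q := by
    rwa [recipPoly, h0, _root_.inv_zero, C_0, zero_mul, isCoprime_zero_right] at h
  obtain ⟨c, hc, rfl⟩ := isUnit_iff.1 hq
  exact hc.ne_zero (by simpa using h0)

theorem monic_recipPoly (h : q.coeff 0 ≠ 0) : (recipPoly q).Monic := by
  rw [recipPoly, Monic, leadingCoeff_mul, leadingCoeff_C, reverse_leadingCoeff, trailingCoeff,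
    natTrailingDegree_eq_zero.2 (.inr h), inv_mul_cancel₀ h]

theorem natDegree_recipPoly (h : q.coeff 0 ≠ 0) : (recipPoly q).natDegree = q.natDegree := by
  rw [recipPoly, natDegree_C_mul (inv_ne_zero h), reverse_natDegree,
    natTrailingDegree_eq_zero.2 (.inr h), Nat.sub_zero]

theorem exists_aeval_isIdempotentElem {A : Type*} [Ring A] [Algebra K A] {a b : A}
    (hab : a * b = 1) (hba : b * a = 1) (hco : IsCoprime q (recipPoly q))
    (ha : aeval a (q * recipPoly q) = 0) :
    ∃ f : K[X], IsIdempotentElem (aeval a f) ∧ aeval b f = 1 - aeval a f := by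
  have h0 := coeff_zero_ne_zero_of_isCoprime_recipPoly hco
  obtain ⟨u, v, huv⟩ := hco
  set r := recipPoly q
  have hsum (c : A) : aeval c (u * q) = 1 - aeval c (v * r) := by
    rw [eq_sub_iff_add_eq, ← map_add, huv, map_one]
  have hb_q : aeval b q = q.coeff 0 • (aeval a r * b ^ q.natDegree) := by
    rw [aeval_recipPoly hba, smul_mul_assoc, smul_inv_smul₀ h0, mul_assoc,
      pow_mul_pow_eq_one _ hab, mul_one]
  have hf : aeval a (v * r) * aeval b (v * r) = 0 := by
    rw [mul_comm v r, map_mul (aeval b), aeval_recipPoly hab, smul_mul_assoc, mul_smul_comm,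
      ← mul_assoc, ← mul_assoc, ← map_mul, mul_comm (r * v), ← mul_assoc, map_mul, ha]
    simp only [zero_mul, smul_zero]
  have hg : aeval a (u * q) * aeval b (u * q) = 0 := by
    rw [mul_comm u q, map_mul (aeval b), hb_q, smul_mul_assoc, mul_smul_comm,
      ← mul_assoc, ← mul_assoc, ← map_mul, mul_right_comm, map_mul, ha]
    simp only [zero_mul, smul_zero]
  have hidem : aeval a (v * r) * (1 - aeval a (v * r)) = 0 := by
    rw [← hsum, ← map_mul, mul_mul_mul_comm, mul_comm r, map_mul, ha, mul_zero]
  refine ⟨v * r, ?_, ?_⟩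
  · rwa [mul_sub, mul_one, sub_eq_zero, eq_comm] at hidem
  · rw [hsum, hsum, sub_mul, mul_sub, mul_sub, hf, one_mul, one_mul, mul_one, sub_zero,
      sub_right_comm, sub_eq_zero] at hg
    exact hg.symm

theorem recipPoly_dvd_minpoly {A : Type*} [Ring A] [Algebra K A] [FiniteDimensional K A]
    {a b : A} (hba : b * a = 1) (hb : aeval b (minpoly K a) = 0) (h0 : q.coeff 0 ≠ 0)
    (hq : q ∣ minpoly K a) :
    recipPoly q ∣ minpoly K a := by
  have ha : IsIntegral K a := Algebra.IsIntegral.isIntegral a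
  have hdvd : minpoly K a ∣ (minpoly K a).reverse :=
    minpoly.dvd K a (by rw [← aeval_mul_pow_eq_aeval_reverse hba, hb, zero_mul])
  have hassoc : Associated (minpoly K a) (minpoly K a).reverse :=
    associated_of_dvd_of_natDegree_le hdvd (by simpa using minpoly.ne_zero ha)
      (reverse_natDegree_le _)
  have hrev : q.reverse ∣ minpoly K a := by
    obtain ⟨h, hh⟩ := hq
    exact (Dvd.intro _ (by rw [hh, reverse_mul_of_domain])).trans hassoc.symm.dvd
  rwa [recipPoly, (isUnit_C.2 (inv_ne_zero h0).isUnit).mul_left_dvd]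

end Polynomial

section Intertwining

variable {m n K : Type*} [Fintype m] [DecidableEq m] [Fintype n] [DecidableEq n] [Field K]

theorem aeval_mul_eq_mul_aeval {A : Matrix m m K} {B : Matrix n n K} {T : Matrix m n K}
    (h : A * T = T * B) (f : K[X]) : aeval A f * T = T * aeval B f := by
  induction f using Polynomial.induction_on' with
  | add f g hf hg => simp only [map_add, Matrix.add_mul, Matrix.mul_add, hf, hg]
  | monomial k c =>
    have hpow : A ^ k * T = T * B ^ k := by
      induction k with
      | zero => simp
      | succ k ih =>
        rw [pow_succ, pow_succ, Matrix.mul_assoc, h, ← Matrix.mul_assoc, ih, Matrix.mul_assoc]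
    simp only [aeval_monomial, ← Algebra.smul_def, Matrix.smul_mul, Matrix.mul_smul, hpow]

theorem minpoly_dvd_minpoly_fromBlocks_zero₂₁ (A : Matrix m m K) (B : Matrix m n K)
    (D : Matrix n n K) : minpoly K A ∣ minpoly K (fromBlocks A B 0 D) := by
  let T : Matrix (m ⊕ n) m K := fromRows 1 0
  have hT : fromBlocks A B 0 D * T = T * A := by
    rw [fromBlocks_mul_fromRows, fromRows_mul]
    simp
  have h0 := aeval_mul_eq_mul_aeval hT (minpoly K (fromBlocks A B 0 D))
  rw [minpoly.aeval, Matrix.zero_mul, fromRows_mul, Matrix.one_mul] at h0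
  exact minpoly.dvd K A (congrArg toRows₁ h0.symm)

theorem minpoly_dvd_minpoly_fromBlocks_zero₁₂ (A : Matrix m m K) (C : Matrix n m K)
    (D : Matrix n n K) : minpoly K A ∣ minpoly K (fromBlocks A 0 C D) := by
  let T : Matrix m (m ⊕ n) K := fromCols 1 0
  have hT : A * T = T * fromBlocks A 0 C D := by
    rw [fromCols_mul_fromBlocks, mul_fromCols]
    simp
  have h0 := aeval_mul_eq_mul_aeval hT (minpoly K (fromBlocks A 0 C D))
  rw [minpoly.aeval, Matrix.mul_zero, mul_fromCols, Matrix.mul_one] at h0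
  exact minpoly.dvd K A (congrArg toCols₁ h0)

end Intertwining

section Symplectic

variable {l R : Type*} [Fintype l] [DecidableEq l] [CommRing R]

/-- The involution `A ↦ -J Aᵀ J` of the matrix ring, the adjoint with respect to the symplectic
form. It is local to this file because matrices over a ring with a star operation already carry
the conjugate transpose. -/
abbrev symplecticStarRing : StarRing (Matrix (l ⊕ l) (l ⊕ l) R) where
  star A := -(J l R) * Aᵀ * J l R
  star_involutive A := by
    simp only [transpose_mul, transpose_neg, J_transpose, transpose_transpose, neg_neg]
    calc -J l R * (-J l R * (A * J l R)) * J l R = J l R * J l R * A * (J l R * J l R) := by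
          noncomm_ring
      _ = A := by rw [J_squared]; noncomm_ring
  star_mul A B := by
    have h : J l R * J l R = -1 := J_squared l R
    rw [transpose_mul]
    calc -J l R * (Bᵀ * Aᵀ) * J l R = -J l R * Bᵀ * (-(-1)) * Aᵀ * J l R := by noncomm_ring
      _ = _ := by rw [← h]; noncomm_ring
  star_add A B := by
    rw [transpose_add]; noncomm_ring

attribute [local instance] symplecticStarRing

theorem mem_unitary_iff_mem_symplecticGroup {A : Matrix (l ⊕ l) (l ⊕ l) R} :
    A ∈ unitary (Matrix (l ⊕ l) (l ⊕ l) R) ↔ A ∈ symplecticGroup l R := by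
  refine ⟨fun h ↦ SymplecticGroup.mem_iff.2 ?_, fun h ↦ ?_⟩
  · calc A * J l R * Aᵀ = A * (-J l R * Aᵀ * J l R) * J l R := by
          rw [Matrix.mul_assoc A (-J l R * Aᵀ * J l R), Matrix.mul_assoc _ (J l R) (J l R),
            J_squared]
          noncomm_ring
      _ = J l R := by rw [show A * (-J l R * Aᵀ * J l R) = 1 from h.2, Matrix.one_mul]
  · have hdet := SymplecticGroup.symplectic_det h
    have hstar : star A = A⁻¹ := (SymplecticGroup.inv_eq_symplectic_inv A h).symm
    exact ⟨hstar ▸ nonsing_inv_mul A hdet, hstar ▸ mul_nonsing_inv A hdet⟩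

theorem star_aeval (A : Matrix (l ⊕ l) (l ⊕ l) R) (f : R[X]) :
    star (aeval A f) = aeval (star A) f := by
  induction f using Polynomial.induction_on' with
  | add f g hf hg => simp only [map_add, star_add, hf, hg]
  | monomial k c =>
    have hsmul (B : Matrix (l ⊕ l) (l ⊕ l) R) : star (c • B) = c • star B := by
      change -J l R * (c • B)ᵀ * J l R = c • (-J l R * Bᵀ * J l R)
      rw [transpose_smul, Matrix.mul_smul, Matrix.smul_mul]
    rw [aeval_monomial, aeval_monomial, ← Algebra.smul_def, ← Algebra.smul_def, hsmul, star_pow]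

theorem isConj_of_minpoly_eq_mul_recipPoly {K : Type*} [Field K] {P Q : symplecticGroup l K}
    {q : K[X]} (hP : IsCyclicMat P.1) (hco : IsCoprime q (recipPoly q))
    (hPq : minpoly K P.1 = q * recipPoly q) (hQq : minpoly K Q.1 = q * recipPoly q) :
    IsConj P Q := by
  have hPu := mem_unitary_iff_mem_symplecticGroup.2 P.2
  have hQu := mem_unitary_iff_mem_symplecticGroup.2 Q.2
  obtain ⟨s, hs⟩ := hP.isConj (hPq.trans hQq.symm)
  obtain ⟨f, hf, hf'⟩ := exists_aeval_isIdempotentElem hPu.2 hPu.1 hco (hPq ▸ minpoly.aeval K P.1)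
  obtain ⟨u, hu, hup⟩ := exists_unitary_conj hPu hQu s.isUnit hs hf ((star_aeval _ _).trans hf')
    fun t ht ↦ aeval_mul_eq_mul_aeval ht f
  exact isConj_iff.2 ⟨⟨u, mem_unitary_iff_mem_symplecticGroup.1 hu⟩,
    mul_inv_eq_iff_eq_mul.2 (Subtype.ext hup)⟩

theorem minpoly_eq_mul_recipPoly {K : Type*} [Field K] (P : symplecticGroup l K) {q : K[X]}
    (hq : q.Monic) (hdeg : q.natDegree = Fintype.card l) (hco : IsCoprime q (recipPoly q))
    (hdvd : q ∣ minpoly K P.1) : minpoly K P.1 = q * recipPoly q := by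
  have h0 := coeff_zero_ne_zero_of_isCoprime_recipPoly hco
  have hPu := mem_unitary_iff_mem_symplecticGroup.2 P.2
  have hstar : aeval (star P.1) (minpoly K P.1) = 0 := by
    rw [← star_aeval, minpoly.aeval, star_zero]
  have hmul : q * recipPoly q ∣ minpoly K P.1 :=
    hco.mul_dvd hdvd (recipPoly_dvd_minpoly hPu.1 hstar h0 hdvd)
  have hle : (minpoly K P.1).natDegree ≤ (q * recipPoly q).natDegree := by
    rw [natDegree_mul hq.ne_zero (monic_recipPoly h0).ne_zero, natDegree_recipPoly h0, hdeg,
      ← Fintype.card_sum, ← charpoly_natDegree_eq_dim P.1]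
    exact natDegree_le_of_dvd (minpoly_dvd_charpoly P.1) (charpoly_monic P.1).ne_zero
  exact eq_of_monic_of_dvd_of_natDegree_le (hq.mul (monic_recipPoly h0))
    (minpoly.monic (Algebra.IsIntegral.isIntegral _)) hmul hle

end Symplectic

section BlockFactorization

open scoped Pointwise

variable {l R : Type*} [Fintype l] [DecidableEq l] [CommRing R]

theorem exists_lower_mul_upper {N : symplecticGroup l R} {X Y : Matrix l l R}
    (hX : IsUnit X.det) (hY : IsUnit Y.det) (hN : N.1.toBlocks₁₁ = X * Y) :
    ∃ L U : symplecticGroup l R, (∃ C D, L.1 = fromBlocks X 0 C D) ∧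
      (∃ B D, U.1 = fromBlocks Y B 0 D) ∧ L * U = N := by
  obtain ⟨A, B, C, D, hABCD⟩ : ∃ A B C D, N.1 = fromBlocks A B C D :=
    ⟨_, _, _, _, N.1.fromBlocks_toBlocks.symm⟩
  obtain rfl : A = X * Y := by rwa [hABCD, toBlocks_fromBlocks₁₁] at hN
  have hXT : Xᵀ * X⁻¹ᵀ = 1 := by rw [← transpose_mul, nonsing_inv_mul X hX, transpose_one]
  have hYT : Y⁻¹ᵀ * Yᵀ = 1 := by rw [← transpose_mul, mul_nonsing_inv Y hY, transpose_one]
  have hL : fromBlocks X 0 (C * Y⁻¹) X⁻¹ᵀ ∈ symplecticGroup l R := by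
    refine SymplecticGroup.fromBlocks_mem_iff.2 ⟨?_, by simp, by simpa using hXT⟩
    have hC := (SymplecticGroup.fromBlocks_mem_iff.1 (hABCD ▸ N.2)).1
    calc Xᵀ * (C * Y⁻¹) = Y⁻¹ᵀ * Yᵀ * Xᵀ * C * Y⁻¹ := by
          rw [hYT, Matrix.one_mul, Matrix.mul_assoc]
      _ = Y⁻¹ᵀ * ((X * Y)ᵀ * C) * Y⁻¹ := by rw [transpose_mul]; simp only [Matrix.mul_assoc]
      _ = Y⁻¹ᵀ * Cᵀ * X * (Y * Y⁻¹) := by rw [hC]; simp only [Matrix.mul_assoc]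
      _ = (C * Y⁻¹)ᵀ * X := by rw [mul_nonsing_inv Y hY, Matrix.mul_one, transpose_mul]
  let L : symplecticGroup l R := ⟨_, hL⟩
  refine ⟨L, L⁻¹ * N, ⟨_, _, rfl⟩, ?_, mul_inv_cancel_left L N⟩
  obtain ⟨E, F, G, H, hU⟩ : ∃ E F G H, (L⁻¹ * N).1 = fromBlocks E F G H :=
    ⟨_, _, _, _, (L⁻¹ * N).1.fromBlocks_toBlocks.symm⟩
  have hLU : L.1 * (L⁻¹ * N).1 = N.1 := congrArg Subtype.val (mul_inv_cancel_left L N)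
  rw [hU, hABCD, fromBlocks_multiply, fromBlocks_inj] at hLU
  obtain ⟨hE, -, hG, -⟩ := hLU
  obtain rfl : E = Y := by
    rw [Matrix.zero_mul, add_zero] at hE
    simpa [nonsing_inv_mul_cancel_left _ _ hX] using congrArg (X⁻¹ * ·) hE
  obtain rfl : G = 0 := by
    rw [Matrix.mul_assoc, nonsing_inv_mul E hY, Matrix.mul_one, add_eq_left] at hG
    simpa [← Matrix.mul_assoc, hXT] using congrArg (Xᵀ * ·) hG
  exact ⟨F, H, hU⟩

theorem exists_isConj_toBlocks₁₁ {N : symplecticGroup l R} {Z : Matrix l l R} (hZ : Z.IsSymm) :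
    ∃ N' : symplecticGroup l R, IsConj N N' ∧
      N'.1.toBlocks₁₁ = N.1.toBlocks₁₁ + Z * N.1.toBlocks₂₁ := by
  have hT : fromBlocks 1 Z 0 1 ∈ symplecticGroup l R := by
    simp [SymplecticGroup.fromBlocks_mem_iff, hZ.eq]
  have hinv : (fromBlocks 1 Z 0 1 : Matrix (l ⊕ l) (l ⊕ l) R)⁻¹ = fromBlocks 1 (-Z) 0 1 :=
    inv_eq_right_inv (by simp [fromBlocks_multiply])
  let T : symplecticGroup l R := ⟨_, hT⟩
  refine ⟨T * N * T⁻¹, isConj_iff.2 ⟨T, rfl⟩, ?_⟩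
  have hconj : (T * N * T⁻¹).1 = fromBlocks 1 Z 0 1 * N.1 * fromBlocks 1 (-Z) 0 1 := by
    rw [Submonoid.coe_mul, Submonoid.coe_mul, SymplecticGroup.coe_inv', hinv]
  rw [hconj, ← N.1.fromBlocks_toBlocks, fromBlocks_multiply, fromBlocks_multiply]
  simp

theorem mem_conjugatesOf_mul_of_isConj {G : Type*} [Group G] {a b g h : G}
    (hgh : IsConj g h) (hg : g ∈ conjugatesOf a * conjugatesOf b) :
    h ∈ conjugatesOf a * conjugatesOf b := by
  obtain ⟨c, rfl⟩ := isConj_iff.1 hgh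
  obtain ⟨x, hx, y, hy, rfl⟩ := Set.mem_mul.1 hg
  refine ⟨c * x * c⁻¹, ?_, c * y * c⁻¹, ?_, by group⟩
  · exact IsConj.trans hx (isConj_iff.2 ⟨c, rfl⟩)
  · exact IsConj.trans hy (isConj_iff.2 ⟨c, rfl⟩)

theorem isUnit_det_of_isUnit_charpoly_coeff_zero {A : Matrix l l R}
    (h : IsUnit (A.charpoly.coeff 0)) : IsUnit A.det := by
  rw [det_eq_sign_charpoly_coeff]
  exact (isUnit_one.neg.pow _).mul h

theorem mem_conjugatesOf_mul_of_toBlocks₁₁_eq_mul {K : Type*} [Field K]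
    {P₁ P₂ N : symplecticGroup l K} {q₁ q₂ : K[X]} (hc₁ : IsCyclicMat P₁.1) (hc₂ : IsCyclicMat P₂.1)
    (hq₁ : IsCoprime q₁ (recipPoly q₁)) (hq₂ : IsCoprime q₂ (recipPoly q₂))
    (hP₁ : minpoly K P₁.1 = q₁ * recipPoly q₁) (hP₂ : minpoly K P₂.1 = q₂ * recipPoly q₂)
    {X Y : Matrix l l K} (hX : IsCyclicMat X) (hY : IsCyclicMat Y)
    (hXq : X.charpoly = q₁) (hYq : Y.charpoly = q₂) (hN : N.1.toBlocks₁₁ = X * Y) :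
    N ∈ conjugatesOf P₁ * conjugatesOf P₂ := by
  subst hXq hYq
  obtain ⟨L, U, ⟨C, D, hL⟩, ⟨B, D', hU⟩, hLU⟩ := exists_lower_mul_upper
    (isUnit_det_of_isUnit_charpoly_coeff_zero
      (coeff_zero_ne_zero_of_isCoprime_recipPoly hq₁).isUnit)
    (isUnit_det_of_isUnit_charpoly_coeff_zero
      (coeff_zero_ne_zero_of_isCoprime_recipPoly hq₂).isUnit)
    hN
  have hL' : minpoly K L.1 = X.charpoly * recipPoly X.charpoly :=
    minpoly_eq_mul_recipPoly L X.charpoly_monic X.charpoly_natDegree_eq_dim hq₁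
      (hL ▸ hX ▸ minpoly_dvd_minpoly_fromBlocks_zero₁₂ X C D)
  have hU' : minpoly K U.1 = Y.charpoly * recipPoly Y.charpoly :=
    minpoly_eq_mul_recipPoly U Y.charpoly_monic Y.charpoly_natDegree_eq_dim hq₂
      (hU ▸ hY ▸ minpoly_dvd_minpoly_fromBlocks_zero₂₁ Y B D')
  exact ⟨L, isConj_of_minpoly_eq_mul_recipPoly hc₁ hq₁ hP₁ hL',
    U, isConj_of_minpoly_eq_mul_recipPoly hc₂ hq₂ hP₂ hU', hLU⟩

end BlockFactorization

/-- The symplectic form on column vectors with Gram matrix `J`. In the sign convention of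
`Matrix.J`, the second half of the standard basis pairs to `1` with the first half. -/
def symplecticForm (l R : Type*) [Fintype l] [DecidableEq l] [CommRing R] :
    LinearMap.BilinForm R (l ⊕ l → R) :=
  toBilin' (J l R)

local notation "ω" => symplecticForm _ _

section SymplecticForm

variable {l R K : Type*} [Fintype l] [DecidableEq l] [CommRing R] [Field K]

theorem symplecticForm_apply (x y : l ⊕ l → R) : ω x y = x ⬝ᵥ J l R *ᵥ y :=
  toBilin'_apply' _ x y

theorem symplecticForm_isAlt : (symplecticForm l R).IsAlt := by
  intro x
  obtain ⟨u, v, rfl⟩ : ∃ u v, x = Sum.elim u v := ⟨_, _, (Sum.elim_comp_inl_inr x).symm⟩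
  simp [symplecticForm_apply, J, fromBlocks_mulVec, sumElim_dotProduct_sumElim, neg_mulVec,
    dotProduct_comm u]

theorem symplecticForm_nondegenerate : (symplecticForm l K).Nondegenerate :=
  LinearMap.BilinForm.nondegenerate_toBilin'_of_det_ne_zero' _ (isUnit_det_J l K).ne_zero

theorem symplecticForm_mulVec_mulVec (M : symplecticGroup l R) (x y : l ⊕ l → R) :
    ω (M.1 *ᵥ x) (M.1 *ᵥ y) = ω x y := by
  rw [symplecticForm_apply, symplecticForm_apply, mulVec_mulVec, dotProduct_mulVec, vecMul_mulVec,
    ← dotProduct_mulVec, ← Matrix.mul_assoc, SymplecticGroup.mem_iff'.1 M.2]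

theorem exists_symplecticForm_mulVec_self_ne_zero {M : symplecticGroup l K} (hM : M * M ≠ 1) :
    ∃ x, ω (M.1 *ᵥ x) x ≠ 0 := by
  contrapose! hM
  have hswap (x y : l ⊕ l → K) : ω x (M.1 *ᵥ y) = ω (M.1 *ᵥ x) y := by
    have h := hM (x + y)
    rw [mulVec_add] at h
    simp only [map_add, LinearMap.add_apply, hM, zero_add, add_zero] at h
    rwa [← symplecticForm_isAlt.neg_eq, neg_eq_iff_add_eq_zero]
  have hfix (y : l ⊕ l → K) : M.1 *ᵥ (M.1 *ᵥ y) = y := by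
    refine sub_eq_zero.1 (symplecticForm_nondegenerate.2 _ fun x ↦ ?_)
    rw [map_sub, hswap, symplecticForm_mulVec_mulVec, sub_self]
  refine Subtype.ext (ext_of_mulVec_single fun i ↦ ?_)
  rw [Submonoid.coe_mul, ← mulVec_mulVec, hfix, Submonoid.coe_one, one_mulVec]

theorem mul_J_mul_mul_transpose_apply (A B : Matrix (l ⊕ l) (l ⊕ l) R) (i j : l ⊕ l) :
    (B * J l R * (A * Bᵀ)) i j = ω (B i) (A *ᵥ B j) := by
  rw [symplecticForm_apply, dotProduct_mulVec]
  rfl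

/-- Vectors `e i` and `f i` which together form a symplectic basis, with `ω (f i) (e i) = 1`. -/
structure IsSymplecticFrame (e f : l → l ⊕ l → R) : Prop where
  form_left_left (i j : l) : ω (e i) (e j) = 0
  form_right_right (i j : l) : ω (f i) (f j) = 0
  form_right_left (i j : l) : ω (f i) (e j) = (1 : Matrix l l R) i j

namespace IsSymplecticFrame

variable {e f : l → l ⊕ l → R}

theorem of_sumElim_mem_symplecticGroup (h : IsSymplecticFrame e f) :
    of (Sum.elim e f) ∈ symplecticGroup l R := by
  refine SymplecticGroup.mem_iff.2 (Matrix.ext fun i j ↦ ?_)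
  have hij := mul_J_mul_mul_transpose_apply 1 (of (Sum.elim e f)) i j
  rw [Matrix.one_mul, one_mulVec] at hij
  rw [hij]
  rcases i with i | i <;> rcases j with j | j
  · exact h.form_left_left i j
  · rw [← symplecticForm_isAlt.neg_eq]
    exact (congrArg Neg.neg (h.form_right_left j i)).trans (by simp [J, one_apply, eq_comm])
  · exact h.form_right_left i j
  · exact h.form_right_right i j

theorem exists_isConj (h : IsSymplecticFrame e f) (M : symplecticGroup l R) :
    ∃ N : symplecticGroup l R, IsConj M N ∧
      (∀ i j, N.1.toBlocks₁₁ i j = ω (f i) (M.1 *ᵥ e j)) ∧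
      ∀ i j, N.1.toBlocks₂₁ i j = -ω (e i) (M.1 *ᵥ e j) := by
  let B : Matrix (l ⊕ l) (l ⊕ l) R := of (Sum.elim e f)
  have hB : B ∈ symplecticGroup l R := h.of_sumElim_mem_symplecticGroup
  let S : symplecticGroup l R := ⟨Bᵀ, SymplecticGroup.transpose_mem hB⟩
  obtain ⟨N, hN⟩ : ∃ N, N = S⁻¹ * M * S := ⟨_, rfl⟩
  have hSN : S.1 * N.1 = M.1 * Bᵀ := by
    rw [hN, ← Submonoid.coe_mul, mul_assoc, mul_inv_cancel_left, Submonoid.coe_mul]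
  have hJN : J l R * N.1 = B * J l R * (M.1 * Bᵀ) := by
    calc J l R * N.1 = B * J l R * Bᵀ * N.1 := by rw [SymplecticGroup.mem_iff.1 hB]
      _ = B * J l R * (M.1 * Bᵀ) := by rw [Matrix.mul_assoc, ← hSN]
  have hJ : J l R * N.1 =
      fromBlocks (-N.1.toBlocks₂₁) (-N.1.toBlocks₂₂) N.1.toBlocks₁₁ N.1.toBlocks₁₂ := by
    conv_lhs => rw [← N.1.fromBlocks_toBlocks, J, fromBlocks_multiply]
    simp
  have hrows (i j) : fromBlocks (-N.1.toBlocks₂₁) (-N.1.toBlocks₂₂) N.1.toBlocks₁₁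
      N.1.toBlocks₁₂ i j = ω (B i) (M.1 *ᵥ B j) := by
    rw [← hJ, hJN, mul_J_mul_mul_transpose_apply]
  refine ⟨N, isConj_iff.2 ⟨S⁻¹, by rw [inv_inv, hN]⟩, fun i j ↦ hrows (.inr i) (.inl j),
    fun i j ↦ neg_eq_iff_eq_neg.1 (hrows (.inl i) (.inl j))⟩

end IsSymplecticFrame

end SymplecticForm

section NormalForm

variable {K : Type*} [Field K]

theorem exists_isSymplecticFrame {x y w : Fin 2 ⊕ Fin 2 → K} (hyx : ω y x = 1) (hxw : ω x w = 0)
    (hyw : ω y w = 0) (hw : w ≠ 0) : ∃ v, IsSymplecticFrame ![x, w] ![y, v] := by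
  have hself (v : Fin 2 ⊕ Fin 2 → K) : ω v v = 0 := symplecticForm_isAlt.self_eq_zero v
  have hswap (u v : Fin 2 ⊕ Fin 2 → K) : ω u v = -ω v u := (symplecticForm_isAlt.neg_eq v u).symm
  obtain ⟨z, hz⟩ : ∃ z, ω z w = 1 := by
    obtain ⟨z, hz⟩ := not_forall.1 (mt (symplecticForm_nondegenerate.2 w) hw)
    exact ⟨(ω z w)⁻¹ • z, by simp [inv_mul_cancel₀ hz]⟩
  have hwx : ω w x = 0 := by rw [hswap, hxw, neg_zero]
  have hxy : ω x y = -1 := by rw [hswap, hyx]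
  let v := z - ω z x • y + ω z y • x
  have hvx : ω v x = 0 := by simp [v, hyx, hself]
  have hvw : ω v w = 1 := by simp [v, hz, hxw, hyw]
  have hvy : ω v y = 0 := by simp [v, hxy, hself]
  have hyv : ω y v = 0 := by rw [hswap, hvy, neg_zero]
  refine ⟨v, ?_, ?_, ?_⟩
  · simp [Fin.forall_fin_two, hself, hxw, hwx]
  · simp [Fin.forall_fin_two, hself, hvy, hyv]
  · simp [Fin.forall_fin_two, hyx, hyw, hvx, hvw]

theorem exists_ne_zero_forall_apply_eq_zero {V ι : Type*} [AddCommGroup V] [Module K V]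
    [FiniteDimensional K V] [Fintype ι] (φ : ι → Module.Dual K V)
    (h : Fintype.card ι < Module.finrank K V) : ∃ w ≠ 0, ∀ i, φ i w = 0 := by
  obtain ⟨w, hw, hw0⟩ := (Submodule.ne_bot_iff _).1
    (LinearMap.ker_ne_bot_of_finrank_lt (f := LinearMap.pi φ) (by simpa using h))
  exact ⟨w, hw0, fun i ↦ congrFun (LinearMap.mem_ker.1 hw) i⟩

theorem exists_isSymplecticFrame_mulVec_eq_smul {M : symplecticGroup (Fin 2) K}
    (hM : M * M ≠ 1) :
    ∃ e f, IsSymplecticFrame e f ∧ ∃ m : K, m ≠ 0 ∧ M.1 *ᵥ e 0 = m • f 0 ∧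
      ω (e 0) (M.1 *ᵥ e 1) = 0 := by
  obtain ⟨x, hx⟩ := exists_symplecticForm_mulVec_self_ne_zero hM
  obtain ⟨w, hw, hω⟩ := exists_ne_zero_forall_apply_eq_zero
    ![symplecticForm _ K x, symplecticForm _ K (M.1 *ᵥ x),
      symplecticForm _ K x ∘ₗ M.1.mulVecLin] (by simp)
  have hxw : ω x w = 0 := hω 0
  have hMxw : ω (M.1 *ᵥ x) w = 0 := hω 1
  have hxMw : ω x (M.1 *ᵥ w) = 0 := hω 2
  set m := ω (M.1 *ᵥ x) x with hm
  obtain ⟨v, hframe⟩ := exists_isSymplecticFrame (y := m⁻¹ • M.1 *ᵥ x)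
    (by simp [← hm, inv_mul_cancel₀ hx]) hxw (by simp [hMxw]) hw
  exact ⟨_, _, hframe, m, hx, (smul_inv_smul₀ hx _).symm, hxMw⟩

theorem exists_isConj_normalForm {M : symplecticGroup (Fin 2) K} (hM : M * M ≠ 1) :
    ∃ N, IsConj M N ∧ ∃ m n c : K, m ≠ 0 ∧ (n ≠ 0 ∨ c ≠ 0) ∧
      N.1.toBlocks₁₁ = !![0, 0; 0, c] ∧ N.1.toBlocks₂₁ = !![m, 0; 0, n] := by
  obtain ⟨e, f, hframe, m, hm, hMe, heMe⟩ := exists_isSymplecticFrame_mulVec_eq_smul hM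
  obtain ⟨N, hMN, hN₁₁, hN₂₁⟩ := hframe.exists_isConj M
  have hfMe : ω (f 0) (M.1 *ᵥ e 1) = 0 := by
    have h := symplecticForm_mulVec_mulVec M (e 0) (e 1)
    rw [hMe, hframe.form_left_left] at h
    simpa [hm] using h
  have hef (i : Fin 2) : -ω (e i) (f 0) = (1 : Matrix (Fin 2) (Fin 2) K) 0 i :=
    (symplecticForm_isAlt.neg_eq _ _).trans (hframe.form_right_left 0 i)
  have hA : N.1.toBlocks₁₁ = !![0, 0; 0, ω (f 1) (M.1 *ᵥ e 1)] := by
    ext i j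
    fin_cases i <;> fin_cases j <;> simp [hN₁₁, hMe, hfMe, hframe.form_right_right]
  have hC : N.1.toBlocks₂₁ = !![m, 0; 0, -ω (e 1) (M.1 *ᵥ e 1)] := by
    ext i j
    fin_cases i <;> fin_cases j <;> simp [hN₂₁, hMe, heMe, ← mul_neg, hef]
  refine ⟨N, hMN, m, _, _, hm, ?_, hA, hC⟩
  by_contra! h
  have hcol (i) : N.1 i (.inl 1) = 0 := by
    rcases i with i | i
    · refine (congrFun₂ hA i 1).trans ?_
      fin_cases i <;> simp [h]
    · refine (congrFun₂ hC i 1).trans ?_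
      fin_cases i <;> simp [h]
  exact (SymplecticGroup.symplectic_det N.2).ne_zero (det_eq_zero_of_column_eq_zero _ hcol)

end NormalForm

section FinTwo

variable {K : Type*} [Field K]

theorem isCyclicMat_of_apply_one_zero_ne_zero {A : Matrix (Fin 2) (Fin 2) K} (h : A 1 0 ≠ 0) :
    IsCyclicMat A := by
  have hA : IsIntegral K A := Algebra.IsIntegral.isIntegral A
  have hone : (minpoly K A).natDegree ≠ 1 := by
    rw [Ne, minpoly.natDegree_eq_one_iff]
    rintro ⟨c, rfl⟩
    exact h (algebraMap_matrix_apply.trans (if_neg one_ne_zero))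
  have hpos := minpoly.natDegree_pos hA
  have hdeg : A.charpoly.natDegree = 2 := by simp [charpoly_natDegree_eq_dim]
  exact eq_of_monic_of_dvd_of_natDegree_le (minpoly.monic hA) A.charpoly_monic
    (minpoly_dvd_charpoly A) (by lia)

theorem eq_X_sq_sub_C_mul_X_add_C {q : K[X]} (hq : q.Monic) (hdeg : q.natDegree = 2) :
    q = X ^ 2 - C (-q.coeff 1) * X + C (q.coeff 0) := by
  conv_lhs => rw [hq.as_sum, hdeg]
  simp only [Finset.sum_range_succ, Finset.sum_range_zero, pow_zero, pow_one, mul_one, map_neg]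
  ring

theorem coeff_one_ne_zero_or_coeff_zero_sq_ne_one {q : K[X]} (hq : q.Monic)
    (hdeg : q.natDegree = 2) (hco : IsCoprime q (recipPoly q)) :
    q.coeff 1 ≠ 0 ∨ q.coeff 0 ^ 2 ≠ 1 := by
  by_contra! h
  have h0 := coeff_zero_ne_zero_of_isCoprime_recipPoly hco
  have hself : recipPoly q = q := by
    rw [eq_X_sq_sub_C_mul_X_add_C (monic_recipPoly h0) ((natDegree_recipPoly h0).trans hdeg)]
    conv_rhs => rw [eq_X_sq_sub_C_mul_X_add_C hq hdeg]
    have hinv : (q.coeff 0)⁻¹ = q.coeff 0 := inv_eq_of_mul_eq_one_right (by rw [← sq, h.2])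
    have hcoeff_one : (recipPoly q).coeff 1 = 0 := by
      simp [recipPoly, coeff_reverse, hdeg, revAt_le, h.1]
    have hcoeff_zero : (recipPoly q).coeff 0 = q.coeff 0 := by
      simp [recipPoly, coeff_zero_reverse, hq.leadingCoeff, hinv]
    rw [hcoeff_one, hcoeff_zero, h.1]
  rw [hself, isCoprime_self] at hco
  simpa [hdeg] using natDegree_eq_zero_of_isUnit hco

theorem exists_isSymm_mul_diagonal {m n : K} (hm : m ≠ 0) (hn : n ≠ 0)
    {A : Matrix (Fin 2) (Fin 2) K} (hA : A 0 1 * m = A 1 0 * n) :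
    ∃ Z : Matrix (Fin 2) (Fin 2) K, Z.IsSymm ∧ Z * !![m, 0; 0, n] = A := by
  refine ⟨!![A 0 0 / m, A 0 1 / n; A 0 1 / n, A 1 1 / n], ?_, ?_⟩
  · ext i j
    fin_cases i <;> fin_cases j <;> rfl
  · have h : A 0 1 / n * m = A 1 0 := by rw [div_mul_eq_mul_div, hA, mul_div_cancel_right₀ _ hn]
    conv_rhs => rw [A.eta_fin_two]
    simp [hm, hn, h]

theorem exists_ne_zero_mul_sq_ne {t₁ d₁ t₂ d₂ a b : K} (hd₁ : d₁ ≠ 0) (hd₂ : d₂ ≠ 0) (ha : a ≠ 0)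
    (h₁ : t₁ ≠ 0 ∨ d₁ ^ 2 ≠ 1) (h₂ : t₂ ≠ 0 ∨ d₂ ^ 2 ≠ 1) (h : t₁ * t₂ = 0) :
    ∃ s ≠ 0, a * s ^ 2 ≠ b := by
  by_cases hab : a = b
  · have hsq {s : K} (hs : s ^ 2 ≠ 1) : a * s ^ 2 ≠ b := by
      rwa [← hab, Ne, mul_eq_left₀ ha]
    rcases mul_eq_zero.1 h with ht | ht
    · exact ⟨d₁, hd₁, hsq (h₁.resolve_left (absurd ht ·))⟩
    · exact ⟨d₂, hd₂, hsq (h₂.resolve_left (absurd ht ·))⟩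
  · exact ⟨1, one_ne_zero, by simpa⟩

theorem exists_mul_apply_zero_one_mul_eq {t₁ d₁ t₂ d₂ m n : K} (hd₁ : d₁ ≠ 0) (hd₂ : d₂ ≠ 0)
    (h₁ : t₁ ≠ 0 ∨ d₁ ^ 2 ≠ 1) (h₂ : t₂ ≠ 0 ∨ d₂ ^ 2 ≠ 1) (hm : m ≠ 0) (hn : n ≠ 0) :
    ∃ A B : Matrix (Fin 2) (Fin 2) K, A 1 0 ≠ 0 ∧ A.trace = t₁ ∧ A.det = d₁ ∧
      B 1 0 ≠ 0 ∧ B.trace = t₂ ∧ B.det = d₂ ∧ (A * B) 0 1 * m = (A * B) 1 0 * n := by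
  -- the off-diagonal condition for `A = [[0, -d₁/s], [s, t₁]]` and `B = [[y, *], [p, t₂ - y]]`
  obtain ⟨s, p, y, hs, hp, hspy⟩ :
      ∃ s p y : K, s ≠ 0 ∧ p ≠ 0 ∧ -d₁ * (t₂ - y) * m = s * (s * y + t₁ * p) * n := by
    by_cases h : t₁ * t₂ = 0
    · obtain ⟨s, hs, hne⟩ := exists_ne_zero_mul_sq_ne (b := m * d₁) hd₁ hd₂ hn h₁ h₂ h
      obtain ⟨y, hy⟩ : ∃ y, y * (n * s ^ 2 - m * d₁) = -(m * d₁ * t₂ + n * t₁ * s) :=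
        ⟨_, div_mul_cancel₀ _ (sub_ne_zero.2 hne)⟩
      exact ⟨s, 1, y, hs, one_ne_zero, by linear_combination -hy⟩
    · obtain ⟨ht₁, ht₂⟩ := mul_ne_zero_iff.1 h
      refine ⟨1, -(m * d₁ * t₂) / (n * t₁), 0, one_ne_zero, by simp [*], ?_⟩
      field_simp
      ring
  refine ⟨!![0, -d₁ / s; s, t₁], !![y, (y * (t₂ - y) - d₂) / p; p, t₂ - y], hs, ?_, ?_, hp, ?_, ?_,
    ?_⟩
  · simp [trace_fin_two_of]
  · simp [det_fin_two_of, hs]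
  · simp [trace_fin_two_of]
  · simp [det_fin_two_of, hp]
  · suffices -d₁ / s * (t₂ - y) * m = (s * y + t₁ * p) * n by simpa
    field_simp
    linear_combination hspy

theorem exists_mul_eq_of_ne_zero {t₁ d₁ t₂ d₂ m n : K} (c : K) (hd₁ : d₁ ≠ 0) (hd₂ : d₂ ≠ 0)
    (h₁ : t₁ ≠ 0 ∨ d₁ ^ 2 ≠ 1) (h₂ : t₂ ≠ 0 ∨ d₂ ^ 2 ≠ 1) (hm : m ≠ 0) (hn : n ≠ 0) :
    ∃ A B Z : Matrix (Fin 2) (Fin 2) K, A 1 0 ≠ 0 ∧ A.trace = t₁ ∧ A.det = d₁ ∧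
      B 1 0 ≠ 0 ∧ B.trace = t₂ ∧ B.det = d₂ ∧ Z.IsSymm ∧
      !![0, 0; 0, c] + Z * !![m, 0; 0, n] = A * B := by
  obtain ⟨A, B, hA, htrA, hdetA, hB, htrB, hdetB, hAB⟩ :=
    exists_mul_apply_zero_one_mul_eq hd₁ hd₂ h₁ h₂ hm hn
  obtain ⟨Z, hZ, hZAB⟩ := exists_isSymm_mul_diagonal hm hn (A := A * B - !![0, 0; 0, c])
    (by simpa using hAB)
  exact ⟨A, B, Z, hA, htrA, hdetA, hB, htrB, hdetB, hZ, by rw [hZAB, add_sub_cancel]⟩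

theorem exists_mul_eq_of_eq_zero (t₁ t₂ : K) {d₁ d₂ m c : K} (hd₁ : d₁ ≠ 0)
    (hd₂ : d₂ ≠ 0) (hm : m ≠ 0) (hc : c ≠ 0) :
    ∃ A B Z : Matrix (Fin 2) (Fin 2) K, A 1 0 ≠ 0 ∧ A.trace = t₁ ∧ A.det = d₁ ∧
      B 1 0 ≠ 0 ∧ B.trace = t₂ ∧ B.det = d₂ ∧ Z.IsSymm ∧
      !![0, 0; 0, c] + Z * !![m, 0; 0, 0] = A * B := by
  let A : Matrix (Fin 2) (Fin 2) K := !![0, d₁ * d₂ / c; -c / d₂, t₁]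
  let B : Matrix (Fin 2) (Fin 2) K := !![t₂, -d₂; 1, 0]
  let z := (t₁ - c * t₂ / d₂) / m
  have htrA : A.trace = t₁ := by simp [A, trace_fin_two_of]
  have hdetA : A.det = d₁ := by
    simp only [A, det_fin_two_of]
    field_simp
    ring
  have htrB : B.trace = t₂ := by simp [B, trace_fin_two_of]
  have hdetB : B.det = d₂ := by simp [B, det_fin_two_of]
  refine ⟨A, B, !![d₁ * d₂ / (c * m), z; z, 0], div_ne_zero (neg_ne_zero.2 hc) hd₂, htrA, hdetA,
    one_ne_zero, htrB, hdetB, ?_, ?_⟩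
  · ext i j
    fin_cases i <;> fin_cases j <;> rfl
  · have h₀₀ : d₁ * d₂ / (c * m) * m = d₁ * d₂ / c := by field_simp
    have h₁₀ : z * m = -c / d₂ * t₂ + t₁ := by
      rw [div_mul_cancel₀ _ hm]
      ring
    have h₁₁ : c / d₂ * d₂ = c := div_mul_cancel₀ c hd₂
    ext i j
    fin_cases i <;> fin_cases j <;> simp [A, B, h₀₀, h₁₀, h₁₁, neg_div]

theorem exists_isCyclicMat_mul {q₁ q₂ : K[X]} (hq₁ : q₁.Monic) (hq₂ : q₂.Monic)
    (hdeg₁ : q₁.natDegree = 2) (hdeg₂ : q₂.natDegree = 2) (hco₁ : IsCoprime q₁ (recipPoly q₁))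
    (hco₂ : IsCoprime q₂ (recipPoly q₂)) {m n c : K} (hm : m ≠ 0) (hnc : n ≠ 0 ∨ c ≠ 0) :
    ∃ A B Z : Matrix (Fin 2) (Fin 2) K, IsCyclicMat A ∧ A.charpoly = q₁ ∧
      IsCyclicMat B ∧ B.charpoly = q₂ ∧ Z.IsSymm ∧
      !![0, 0; 0, c] + Z * !![m, 0; 0, n] = A * B := by
  have h₁ := coeff_zero_ne_zero_of_isCoprime_recipPoly hco₁
  have h₂ := coeff_zero_ne_zero_of_isCoprime_recipPoly hco₂
  obtain ⟨A, B, Z, hA, htrA, hdetA, hB, htrB, hdetB, hZ, hAB⟩ :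
      ∃ A B Z : Matrix (Fin 2) (Fin 2) K, A 1 0 ≠ 0 ∧ A.trace = -q₁.coeff 1 ∧
        A.det = q₁.coeff 0 ∧ B 1 0 ≠ 0 ∧ B.trace = -q₂.coeff 1 ∧ B.det = q₂.coeff 0 ∧
        Z.IsSymm ∧ !![0, 0; 0, c] + Z * !![m, 0; 0, n] = A * B := by
    rcases eq_or_ne n 0 with rfl | hn
    · exact exists_mul_eq_of_eq_zero _ _ h₁ h₂ hm (hnc.resolve_left (· rfl))
    · refine exists_mul_eq_of_ne_zero c h₁ h₂ ?_ ?_ hm hn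
      · simpa using coeff_one_ne_zero_or_coeff_zero_sq_ne_one hq₁ hdeg₁ hco₁
      · simpa using coeff_one_ne_zero_or_coeff_zero_sq_ne_one hq₂ hdeg₂ hco₂
  refine ⟨A, B, Z, isCyclicMat_of_apply_one_zero_ne_zero hA, ?_,
    isCyclicMat_of_apply_one_zero_ne_zero hB, ?_, hZ, hAB⟩
  · rw [charpoly_fin_two, htrA, hdetA, ← eq_X_sq_sub_C_mul_X_add_C hq₁ hdeg₁]
  · rw [charpoly_fin_two, htrB, hdetB, ← eq_X_sq_sub_C_mul_X_add_C hq₂ hdeg₂]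

end FinTwo

theorem isSymplectic_iff_mem_symplecticGroup {n : ℕ} {K : Type*} [Field K]
    {P : Matrix (Fin n ⊕ Fin n) (Fin n ⊕ Fin n) K} :
    IsSymplectic P ↔ P ∈ symplecticGroup (Fin n) K := by
  have h : sympJ n K = -J (Fin n) K := by simp [sympJ, J, fromBlocks_neg]
  rw [IsSymplectic, h, SymplecticGroup.mem_iff, Matrix.mul_neg, Matrix.neg_mul, neg_inj]

open scoped Pointwise in
theorem mem_conjugatesOf_mul_of_mul_self_ne_one {K : Type*} [Field K]
    {P₁ P₂ M : symplecticGroup (Fin 2) K} (hc₁ : IsCyclicMat P₁.1) (hc₂ : IsCyclicMat P₂.1)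
    (hs₁ : IsStrictlyHyperbolic P₁.1) (hs₂ : IsStrictlyHyperbolic P₂.1) (hM : M * M ≠ 1) :
    M ∈ conjugatesOf P₁ * conjugatesOf P₂ := by
  obtain ⟨q₁, hq₁, hdeg₁, -, hco₁, hP₁⟩ := hs₁
  obtain ⟨q₂, hq₂, hdeg₂, -, hco₂, hP₂⟩ := hs₂
  obtain ⟨N, hMN, m, n, c, hm, hnc, hN₁₁, hN₂₁⟩ := exists_isConj_normalForm hM
  obtain ⟨A, B, Z, hA, hAq, hB, hBq, hZ, hAB⟩ :=
    exists_isCyclicMat_mul hq₁ hq₂ hdeg₁ hdeg₂ hco₁ hco₂ hm hnc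
  obtain ⟨N', hNN', hN'⟩ := exists_isConj_toBlocks₁₁ (N := N) hZ
  rw [hN₁₁, hN₂₁, hAB] at hN'
  exact mem_conjugatesOf_mul_of_isConj (hMN.trans hNN').symm
    (mem_conjugatesOf_mul_of_toBlocks₁₁_eq_mul hc₁ hc₂ hco₁ hco₂ hP₁ hP₂ hA hB hAq hBq hN')

theorem product_of_cyclic_strictly_hyperbolic_classes_sp4 {K : Type*} [Field K]
    (P₁ P₂ : Matrix (Fin 2 ⊕ Fin 2) (Fin 2 ⊕ Fin 2) K)
    (hP₁ : IsSymplectic P₁) (hP₂ : IsSymplectic P₂)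
    (hc₁ : IsCyclicMat P₁) (hc₂ : IsCyclicMat P₂)
    (hs₁ : IsStrictlyHyperbolic P₁) (hs₂ : IsStrictlyHyperbolic P₂)
    (M : Matrix (Fin 2 ⊕ Fin 2) (Fin 2 ⊕ Fin 2) K)
    (hM : IsSymplectic M)
    (hM2 : M * M ≠ (1 : Matrix (Fin 2 ⊕ Fin 2) (Fin 2 ⊕ Fin 2) K)) :
    ∃ S₁ S₂ : Matrix (Fin 2 ⊕ Fin 2) (Fin 2 ⊕ Fin 2) K,
      IsSymplectic S₁ ∧ IsSymplectic S₂ ∧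
      M = (S₁ * P₁ * S₁⁻¹) * (S₂ * P₂ * S₂⁻¹) := by
  rw [isSymplectic_iff_mem_symplecticGroup] at hP₁ hP₂ hM
  lift P₁ to symplecticGroup (Fin 2) K using hP₁
  lift P₂ to symplecticGroup (Fin 2) K using hP₂
  lift M to symplecticGroup (Fin 2) K using hM
  obtain ⟨g₁, hg₁, g₂, hg₂, rfl⟩ := mem_conjugatesOf_mul_of_mul_self_ne_one hc₁ hc₂ hs₁ hs₂
    fun h ↦ hM2 (congrArg Subtype.val h)
  obtain ⟨S₁, rfl⟩ := isConj_iff.1 hg₁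
  obtain ⟨S₂, rfl⟩ := isConj_iff.1 hg₂
  exact ⟨S₁, S₂, isSymplectic_iff_mem_symplecticGroup.2 S₁.2,
    isSymplectic_iff_mem_symplecticGroup.2 S₂.2, by simp [SymplecticGroup.coe_inv']⟩
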